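/- If a generalized rectangular diagram R' is obtained from a generalized rectangular diagram R by a stabilization of type N, then R' can be obtained from R by performing one vertex addition followed by one end shift of type N. -/

import Mathlib

namespace RectDiag

/-- A generalized rectangular diagram: a finite subset of `ℝ²`, whose elements are
called the vertices of the diagram. -/
abbrev GRD := Finset (ℝ × ℝ)

/-- Two diagrams are combinatorially equivalent (and hence identified) if one maps onto
the other under `(x, y) ↦ (f x, g y)` for some strictly increasing `f g : ℝ → ℝ`. -/
def CombEquiv (R R' : GRD) : Prop :=
  ∃ f g : ℝ → ℝ, StrictMono f ∧ StrictMono g ∧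
    R' = R.image fun p => (f p.1, g p.2)

/-- Move every vertex on the vertical line `x = a` to the vertical line `x = b`. -/
noncomputable def moveCol (R : GRD) (a b : ℝ) : GRD :=
  R.image fun p => if p.1 = a then (b, p.2) else p

/-- Move every vertex on the horizontal line `y = a` to the horizontal line `y = b`. -/
noncomputable def moveRow (R : GRD) (a b : ℝ) : GRD :=
  R.image fun p => if p.2 = a then (p.1, b) else p

/-- Cyclic permutation: an extreme (rightmost, leftmost, top or bottom) edge is moved
to the opposite side of the diagram; only the coordinate perpendicular to the edge
changes. -/
def CyclicPermutation (R R' : GRD) : Prop :=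
  (∃ a b : ℝ, (∃ p ∈ R, p.1 = a) ∧
    (((∀ p ∈ R, p.1 ≤ a) ∧ ∀ p ∈ R, b < p.1) ∨
     ((∀ p ∈ R, a ≤ p.1) ∧ ∀ p ∈ R, p.1 < b)) ∧
    R' = moveCol R a b) ∨
  (∃ a b : ℝ, (∃ p ∈ R, p.2 = a) ∧
    (((∀ p ∈ R, p.2 ≤ a) ∧ ∀ p ∈ R, b < p.2) ∨
     ((∀ p ∈ R, a ≤ p.2) ∧ ∀ p ∈ R, p.2 < b)) ∧
    R' = moveRow R a b)

/-- Two sets of reals interleave in the cyclic order: their elements alternate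
`a₁ < b₁ < a₂ < b₂` (or with the roles of the two sets exchanged). -/
def Interleave (A B : ℝ → Prop) : Prop :=
  (∃ a₁, A a₁ ∧ ∃ b₁, B b₁ ∧ ∃ a₂, A a₂ ∧ ∃ b₂, B b₂ ∧ a₁ < b₁ ∧ b₁ < a₂ ∧ a₂ < b₂) ∨
  (∃ b₁, B b₁ ∧ ∃ a₁, A a₁ ∧ ∃ b₂, B b₂ ∧ ∃ a₂, A a₂ ∧ b₁ < a₁ ∧ a₁ < b₂ ∧ b₂ < a₂)

/-- Exchange the vertical lines `x = a` and `x = b` of a diagram. -/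
noncomputable def swapCols (R : GRD) (a b : ℝ) : GRD :=
  R.image fun p => if p.1 = a then (b, p.2) else if p.1 = b then (a, p.2) else p

/-- Exchange the horizontal lines `y = a` and `y = b` of a diagram. -/
noncomputable def swapRows (R : GRD) (a b : ℝ) : GRD :=
  R.image fun p => if p.2 = a then (p.1, b) else if p.2 = b then (p.1, a) else p

/-- Commutation: two neighboring parallel edges (no vertex lies strictly between the
two parallel lines containing them) that do not interleave exchange their positions. -/
def Commutation (R R' : GRD) : Prop :=
  (∃ a b : ℝ, a < b ∧ (∃ p ∈ R, p.1 = a) ∧ (∃ p ∈ R, p.1 = b) ∧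
    (∀ p ∈ R, ¬ (a < p.1 ∧ p.1 < b)) ∧
    ¬ Interleave (fun y => (a, y) ∈ R) (fun y => (b, y) ∈ R) ∧
    R' = swapCols R a b) ∨
  (∃ a b : ℝ, a < b ∧ (∃ p ∈ R, p.2 = a) ∧ (∃ p ∈ R, p.2 = b) ∧
    (∀ p ∈ R, ¬ (a < p.2 ∧ p.2 < b)) ∧
    ¬ Interleave (fun x => (x, a) ∈ R) (fun x => (x, b) ∈ R) ∧
    R' = swapRows R a b)

def strictlyBetween (a t b : ℝ) : Prop := (a < t ∧ t < b) ∨ (b < t ∧ t < a)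

/-- Stabilization: a vertex `(x, y)` is replaced by the three other corners of a small
square with corners `(x, y)`, `(x', y)`, `(x, y')`, `(x', y')` (fresh lines `x'`, `y'`,
with no vertex of the diagram strictly between the lines `x, x'` nor between `y, y'`).
The two new short edges (sides of the square through the corner `(x', y')`) emerge from
their common end downward-and-leftward or upward-and-rightward exactly when the square
lies to the upper right or to the lower left of the original vertex (type L,
`typeL = true`); for type N (`typeL = false`) they emerge upward-and-leftward or
downward-and-rightward, i.e. the square lies to the upper left or to the lower right. -/
def Stab (typeL : Bool) (R R' : GRD) : Prop :=
  ∃ x y x' y' : ℝ, (x, y) ∈ R ∧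
    (if typeL then ((x < x' ∧ y < y') ∨ (x' < x ∧ y' < y))
     else ((x' < x ∧ y < y') ∨ (x < x' ∧ y' < y))) ∧
    (∀ p ∈ R, ¬ strictlyBetween x p.1 x') ∧
    (∀ p ∈ R, ¬ strictlyBetween y p.2 y') ∧
    (∀ p ∈ R, p.1 ≠ x') ∧ (∀ p ∈ R, p.2 ≠ y') ∧
    R' = insert (x', y) (insert (x, y') (insert (x', y') (R.erase (x, y))))

/-- End shift.  For adjacent vertices `v₁`, `v₂` on an edge (no vertex of the diagram
between them on the edge), where for type L (`typeL = true`) the vertex `v₂` has the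
greater coordinate along the edge and for type N (`typeL = false`) the smaller one:
either the shifts of `v₁`, `v₂` by `ε > 0` in the positive perpendicular direction are
added and `v₁` is removed, or the shifts by `ε` in the negative perpendicular direction
are added and `v₂` is removed; `ε` is small enough that no vertex of the diagram lies
between (or on) the line through `v₁, v₂` and the line through the shifted vertices. -/
def EndShift (typeL : Bool) (R R' : GRD) : Prop :=
  (∃ a y₁ y₂ ε : ℝ, 0 < ε ∧ y₁ < y₂ ∧ (a, y₁) ∈ R ∧ (a, y₂) ∈ R ∧
    (∀ t : ℝ, (a, t) ∈ R → ¬ (y₁ < t ∧ t < y₂)) ∧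
    (((∀ p ∈ R, ¬ (a < p.1 ∧ p.1 ≤ a + ε)) ∧
       R' = insert (a + ε, y₁) (insert (a + ε, y₂)
         (R.erase (a, if typeL then y₁ else y₂)))) ∨
     ((∀ p ∈ R, ¬ (a - ε ≤ p.1 ∧ p.1 < a)) ∧
       R' = insert (a - ε, y₁) (insert (a - ε, y₂)
         (R.erase (a, if typeL then y₂ else y₁)))))) ∨
  (∃ a x₁ x₂ ε : ℝ, 0 < ε ∧ x₁ < x₂ ∧ (x₁, a) ∈ R ∧ (x₂, a) ∈ R ∧
    (∀ t : ℝ, (t, a) ∈ R → ¬ (x₁ < t ∧ t < x₂)) ∧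
    (((∀ p ∈ R, ¬ (a < p.2 ∧ p.2 ≤ a + ε)) ∧
       R' = insert (x₁, a + ε) (insert (x₂, a + ε)
         (R.erase (if typeL then x₁ else x₂, a)))) ∨
     ((∀ p ∈ R, ¬ (a - ε ≤ p.2 ∧ p.2 < a)) ∧
       R' = insert (x₁, a - ε) (insert (x₂, a - ε)
         (R.erase (if typeL then x₂ else x₁, a))))))

/-- Vertex addition: a new vertex is added on the vertical (respectively horizontal)
line through an existing vertex, provided no vertex of the diagram lies on the
horizontal (respectively vertical) line through the new vertex. -/
def VertexAddition (R R' : GRD) : Prop :=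
  ∃ v : ℝ × ℝ, v ∉ R ∧ R' = insert v R ∧
    (((∃ w ∈ R, w.1 = v.1) ∧ ∀ w ∈ R, w.2 ≠ v.2) ∨
     ((∃ w ∈ R, w.2 = v.2) ∧ ∀ w ∈ R, w.1 ≠ v.1))

/-- An elementary move of type L (`typeL = true`) or N (`typeL = false`): a cyclic
permutation, a commutation, a stabilization or destabilization of the given type, an
end shift of the given type, or a vertex addition. -/
def ElemMove (typeL : Bool) (R R' : GRD) : Prop :=
  CyclicPermutation R R' ∨ Commutation R R' ∨ Stab typeL R R' ∨ Stab typeL R' R ∨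
    EndShift typeL R R' ∨ VertexAddition R R'

/-- One step in a sequence of elementary moves of the given type; since diagrams are
identified up to combinatorial equivalence, combinatorially equivalent diagrams are
also related by a step. -/
def Step (typeL : Bool) (R R' : GRD) : Prop :=
  ElemMove typeL R R' ∨ CombEquiv R R'

/-- In the cyclic order (on `ℝ` closed up into a circle), the elements of `A`, then the
point `u`, then the elements of `B` occur in this cyclic order. -/
def CyclicBetween (A : Finset ℝ) (u : ℝ) (B : Finset ℝ) : Prop :=
  ((∀ a ∈ A, a < u) ∧ (∀ b ∈ B, u < b)) ∨
  ((∀ b ∈ B, u < b) ∧ (∀ a ∈ A, ∀ b ∈ B, b < a)) ∨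
  ((∀ a ∈ A, a < u) ∧ (∀ a ∈ A, ∀ b ∈ B, b < a))

/-- Edge breaking.  The vertices of a horizontal (respectively vertical) edge on the
line `c` are separated into two nonempty parts `S₁`, `S₂`, placed on neighboring lines
`c₁ ≤ c ≤ c₂` (`c₁ < c₂`, with no other vertex of the diagram between the lines `c₁`
and `c₂`), forming edges `e₁` (from `S₁`, on `c₁`) and `e₂` (from `S₂`, on `c₂`, the one
with the greater perpendicular coordinate); the two pieces are joined by a short edge on
a fresh line `u`, which in the cyclic order is greater than the coordinates of the
vertices of `e₂` and smaller than those of `e₁` for type L, and the other way around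
(the roles of `e₁` and `e₂` exchanged) for type N. -/
def EdgeBreaking (typeL : Bool) (R R' : GRD) : Prop :=
  (∃ c c₁ c₂ u : ℝ, ∃ S₁ S₂ : Finset ℝ,
    c₁ < c₂ ∧ c₁ ≤ c ∧ c ≤ c₂ ∧ S₁.Nonempty ∧ S₂.Nonempty ∧ Disjoint S₁ S₂ ∧
    (∀ x : ℝ, (x, c) ∈ R ↔ x ∈ S₁ ∪ S₂) ∧
    (∀ p ∈ R, p.1 ≠ u) ∧
    (∀ p ∈ R, c₁ ≤ p.2 ∧ p.2 ≤ c₂ → p.2 = c) ∧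
    (if typeL then CyclicBetween S₂ u S₁ else CyclicBetween S₁ u S₂) ∧
    R' = ((R.filter fun p => p.2 ≠ c) ∪ S₁.image (fun x => (x, c₁)) ∪
      S₂.image (fun x => (x, c₂)) ∪ {(u, c₁), (u, c₂)})) ∨
  (∃ c c₁ c₂ u : ℝ, ∃ S₁ S₂ : Finset ℝ,
    c₁ < c₂ ∧ c₁ ≤ c ∧ c ≤ c₂ ∧ S₁.Nonempty ∧ S₂.Nonempty ∧ Disjoint S₁ S₂ ∧
    (∀ y : ℝ, (c, y) ∈ R ↔ y ∈ S₁ ∪ S₂) ∧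
    (∀ p ∈ R, p.2 ≠ u) ∧
    (∀ p ∈ R, c₁ ≤ p.1 ∧ p.1 ≤ c₂ → p.1 = c) ∧
    (if typeL then CyclicBetween S₂ u S₁ else CyclicBetween S₁ u S₂) ∧
    R' = ((R.filter fun p => p.1 ≠ c) ∪ S₁.image (fun y => (c₁, y)) ∪
      S₂.image (fun y => (c₂, y)) ∪ {(c₁, u), (c₂, u)}))

/-- `p` lies in the open rectangle `(x₀, x₁) × (y₀, y₁)`. -/
def inRect (x₀ x₁ y₀ y₁ : ℝ) (p : ℝ × ℝ) : Prop :=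
  x₀ < p.1 ∧ p.1 < x₁ ∧ y₀ < p.2 ∧ p.2 < y₁

/-- A flype of type L (in the forward direction): for `x₀ < x₁ < x₂`, `y₀ < y₁ < y₂`,
with rectangles `r_ij = (x_i, x_{i+1}) × (y_j, y_{j+1})`: the rectangle `r₁₁` contains
no vertex; in each of `r₀₁` and `r₁₀`, of any two vertices the right one is higher; and
every vertex `v` in `r₀₀` has a vertex `v₀₁ ∈ r₀₁` with the same `x`-coordinate and a
vertex `v₁₀ ∈ r₁₀` with the same `y`-coordinate.  The move takes each such `v` to the
fourth corner of the rectangle with corners `v`, `v₀₁`, `v₁₀`, all other vertices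
staying fixed. -/
def FlypeLOnce (R R' : GRD) : Prop :=
  ∃ x₀ x₁ x₂ y₀ y₁ y₂ : ℝ, x₀ < x₁ ∧ x₁ < x₂ ∧ y₀ < y₁ ∧ y₁ < y₂ ∧
    (∀ p ∈ R, ¬ inRect x₁ x₂ y₁ y₂ p) ∧
    (∀ p ∈ R, ∀ q ∈ R, inRect x₀ x₁ y₁ y₂ p → inRect x₀ x₁ y₁ y₂ q →
      p.1 < q.1 → p.2 < q.2) ∧
    (∀ p ∈ R, ∀ q ∈ R, inRect x₁ x₂ y₀ y₁ p → inRect x₁ x₂ y₀ y₁ q →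
      p.1 < q.1 → p.2 < q.2) ∧
    ∃ φ : ℝ × ℝ → ℝ × ℝ,
      (∀ p ∈ R, ¬ inRect x₀ x₁ y₀ y₁ p → φ p = p) ∧
      (∀ p ∈ R, inRect x₀ x₁ y₀ y₁ p →
        ∃ q ∈ R, ∃ r ∈ R, inRect x₀ x₁ y₁ y₂ q ∧ q.1 = p.1 ∧
          inRect x₁ x₂ y₀ y₁ r ∧ r.2 = p.2 ∧ φ p = (r.1, q.2)) ∧
      R' = R.image φ

/-- A flype of type L: the move just described or its inverse. -/
def FlypeL (R R' : GRD) : Prop := FlypeLOnce R R' ∨ FlypeLOnce R' R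

/-- A fence diagram: posts are horizontal segments `[l, r] × {y}`, `y ∈ posts` (all
related by a vertical shift); wires are vertical segments recorded as
`(x, bottom level, top level)`, with endpoints interior to posts and no two wires on
the same vertical line. -/
structure Fence where
  posts : Finset ℝ
  l : ℝ
  r : ℝ
  wires : Finset (ℝ × ℝ × ℝ)
  hlr : l < r
  hx : ∀ w ∈ wires, l < w.1 ∧ w.1 < r
  hy : ∀ w ∈ wires, w.2.1 ∈ posts ∧ w.2.2 ∈ posts ∧ w.2.1 < w.2.2
  hinj : ∀ w ∈ wires, ∀ w' ∈ wires, w.1 = w'.1 → w = w'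

/-- Combinatorial equivalence of fence diagrams. -/
def FenceEquiv (F F' : Fence) : Prop :=
  ∃ f g : ℝ → ℝ, StrictMono f ∧ StrictMono g ∧
    F'.l = f F.l ∧ F'.r = f F.r ∧
    F'.posts = F.posts.image g ∧
    F'.wires = F.wires.image fun w => (f w.1, g w.2.1, g w.2.2)

/-- The wire on the vertical line `x` joining the posts at levels `p` and `q`. -/
noncomputable def mkWire (x p q : ℝ) : ℝ × ℝ × ℝ := (x, min p q, max p q)

/-- Twirl: the top (respectively bottom) post is moved to the opposite side, taking
along all wires attached to it. -/
def Twirl (F F' : Fence) : Prop :=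
  F'.l = F.l ∧ F'.r = F.r ∧
  ((∃ t b : ℝ, t ∈ F.posts ∧ (∀ y ∈ F.posts, y ≤ t) ∧ (∀ y ∈ F.posts, b < y) ∧
     F'.posts = insert b (F.posts.erase t) ∧
     F'.wires = F.wires.image fun w => if w.2.2 = t then (w.1, b, w.2.1) else w) ∨
   (∃ t b : ℝ, b ∈ F.posts ∧ (∀ y ∈ F.posts, b ≤ y) ∧ (∀ y ∈ F.posts, y < t) ∧
     F'.posts = insert t (F.posts.erase b) ∧
     F'.wires = F.wires.image fun w => if w.2.1 = b then (w.1, w.2.2, t) else w))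

/-- Turn: the rightmost (respectively leftmost) wire is moved to the opposite side. -/
def Turn (F F' : Fence) : Prop :=
  F'.l = F.l ∧ F'.r = F.r ∧ F'.posts = F.posts ∧
  ((∃ w ∈ F.wires, ∃ x : ℝ, (∀ w' ∈ F.wires, w'.1 ≤ w.1) ∧
     F.l < x ∧ (∀ w' ∈ F.wires, w' ≠ w → x < w'.1) ∧ x < w.1 ∧
     F'.wires = insert (x, w.2) (F.wires.erase w)) ∨
   (∃ w ∈ F.wires, ∃ x : ℝ, (∀ w' ∈ F.wires, w.1 ≤ w'.1) ∧
     x < F.r ∧ (∀ w' ∈ F.wires, w' ≠ w → w'.1 < x) ∧ w.1 < x ∧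
     F'.wires = insert (x, w.2) (F.wires.erase w)))

/-- Two wires interleave if exactly one endpoint level of one lies strictly between the
endpoint levels of the other. -/
def WiresInterleave (w w' : ℝ × ℝ × ℝ) : Prop :=
  (w.2.1 < w'.2.1 ∧ w'.2.1 < w.2.2 ∧ w.2.2 < w'.2.2) ∨
  (w'.2.1 < w.2.1 ∧ w.2.1 < w'.2.2 ∧ w'.2.2 < w.2.2)

/-- Slip: two neighboring non-interleaving wires exchange their horizontal positions. -/
def Slip (F F' : Fence) : Prop :=
  F'.l = F.l ∧ F'.r = F.r ∧ F'.posts = F.posts ∧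
  ∃ w₁ ∈ F.wires, ∃ w₂ ∈ F.wires, w₁.1 < w₂.1 ∧
    (∀ w ∈ F.wires, ¬ (w₁.1 < w.1 ∧ w.1 < w₂.1)) ∧
    ¬ WiresInterleave w₁ w₂ ∧
    F'.wires = insert (w₂.1, w₁.2) (insert (w₁.1, w₂.2) ((F.wires.erase w₁).erase w₂))

/-- `a`, `b`, `c` occur in this cyclic order on `ℝ` closed up into a circle. -/
def CyclicOrd3 (a b c : ℝ) : Prop :=
  (a < b ∧ b < c) ∨ (b < c ∧ c < a) ∨ (c < a ∧ a < b)

/-- Slide: given two neighboring wires, the left joining posts at levels `a` and `b`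
and the right joining posts at levels `a` and `c` with `a < b < c < a` in the cyclic
order, they are replaced by two wires at the same horizontal positions, the left
joining levels `b` and `c` and the right joining levels `b` and `a`. -/
def Slide (F F' : Fence) : Prop :=
  F'.l = F.l ∧ F'.r = F.r ∧ F'.posts = F.posts ∧
  ∃ a b c x₁ x₂ : ℝ, x₁ < x₂ ∧ CyclicOrd3 a b c ∧
    mkWire x₁ a b ∈ F.wires ∧ mkWire x₂ a c ∈ F.wires ∧
    (∀ w ∈ F.wires, ¬ (x₁ < w.1 ∧ w.1 < x₂)) ∧
    F'.wires = insert (mkWire x₁ b c) (insert (mkWire x₂ b a)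
      ((F.wires.erase (mkWire x₁ a b)).erase (mkWire x₂ a c)))

/-- Inflation: a new post is added at a fresh vertical level and joined to some
existing post by one new wire (on a fresh vertical line). -/
def Inflation (F F' : Fence) : Prop :=
  F'.l = F.l ∧ F'.r = F.r ∧
  ∃ n m x : ℝ, n ∉ F.posts ∧ m ∈ F.posts ∧
    F.l < x ∧ x < F.r ∧ (∀ w ∈ F.wires, w.1 ≠ x) ∧
    F'.posts = insert n F.posts ∧
    F'.wires = insert (mkWire x n m) F.wires

/-- A fence move: a twirl, a turn, a slip, a slide, an inflation or a deflation. -/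
def FenceMove (F F' : Fence) : Prop :=
  Twirl F F' ∨ Turn F F' ∨ Slip F F' ∨ Slide F F' ∨ Inflation F F' ∨ Inflation F' F

/-- One step in a sequence of fence moves; combinatorially equivalent fence diagrams
are identified. -/
def FenceStep (F F' : Fence) : Prop := FenceMove F F' ∨ FenceEquiv F F'

/-- `R(F)`: the generalized rectangular diagram whose vertices are the endpoints of
the wires of the fence diagram `F`. -/
noncomputable def fenceToGRD (F : Fence) : GRD :=
  F.wires.image (fun w => (w.1, w.2.1)) ∪ F.wires.image (fun w => (w.1, w.2.2))

/-- Every vertical edge of the diagram contains exactly two vertices. -/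
def VertTwo (R : GRD) : Prop :=
  ∀ a : ℝ, (∃ y : ℝ, (a, y) ∈ R) →
    ∃ y₁ y₂ : ℝ, y₁ < y₂ ∧ ∀ y : ℝ, ((a, y) ∈ R ↔ (y = y₁ ∨ y = y₂))

/-- `F` is a fence diagram `F(R)` of the diagram `R` (each of whose vertical edges is
assumed to contain exactly two vertices): its wires are the vertical edges of `R` and
its posts are horizontal segments at exactly the levels of the horizontal edges of
`R`. -/
def IsFenceOf (R : GRD) (F : Fence) : Prop :=
  F.posts = R.image Prod.snd ∧
  ∀ w : ℝ × ℝ × ℝ,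
    (w ∈ F.wires ↔ ((w.1, w.2.1) ∈ R ∧ (w.1, w.2.2) ∈ R ∧ w.2.1 < w.2.2))


/-- a stabilization of type N is the composition of one vertex addition
followed by one end shift of type N (up to the identification of combinatorially
equivalent diagrams). -/
theorem statement19 (R R' : GRD) (h : Stab false R R') :
    ∃ S T : GRD, VertexAddition R S ∧ EndShift false S T ∧ CombEquiv T R' := by
  obtain ⟨x, y, x', y', hxy, hc, hx, hy, hx', hy', rfl⟩ := h
  simp only [Bool.false_eq_true, if_false] at hc
  have hnew : (x, y') ∉ R := fun hm => hy' _ hm rfl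
  have hva : VertexAddition R (insert (x, y') R) :=
    ⟨(x, y'), hnew, rfl, Or.inl ⟨⟨(x, y), hxy, rfl⟩, fun w hw => hy' w hw⟩⟩
  refine ⟨insert (x, y') R,
    insert (x', y) (insert (x, y') (insert (x', y') (R.erase (x, y)))), hva, ?_,
    ⟨id, id, strictMono_id, strictMono_id, by simp⟩⟩
  rcases hc with ⟨h1, h2⟩ | ⟨h1, h2⟩
  · refine Or.inl ⟨x, y, y', x - x', by linarith, h2, by simp [hxy], by simp, ?_, Or.inr ⟨?_, ?_⟩⟩
    · rintro t ht ⟨ha, hb⟩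
      rcases Finset.mem_insert.1 ht with he | hm
      · have : t = y' := congrArg Prod.snd he
        linarith
      · exact hy _ hm (Or.inl ⟨ha, hb⟩)
    · rintro p hp ⟨ha, hb⟩
      rcases Finset.mem_insert.1 hp with rfl | hm
      · exact lt_irrefl _ hb
      · exact hx _ hm (Or.inr ⟨lt_of_le_of_ne (by linarith) (hx' _ hm).symm, hb⟩)
    · have hne : y' ≠ y := ne_of_gt h2
      ext ⟨u, v⟩
      simp only [Finset.mem_insert, Finset.mem_erase, Prod.mk.injEq, ne_eq, sub_sub_cancel,
        Bool.false_eq_true, if_false]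
      grind
  · refine Or.inl ⟨x, y', y, x' - x, by linarith, h2, by simp, by simp [hxy], ?_, Or.inl ⟨?_, ?_⟩⟩
    · rintro t ht ⟨ha, hb⟩
      rcases Finset.mem_insert.1 ht with he | hm
      · have : t = y' := congrArg Prod.snd he
        linarith
      · exact hy _ hm (Or.inr ⟨ha, hb⟩)
    · rintro p hp ⟨ha, hb⟩
      rcases Finset.mem_insert.1 hp with rfl | hm
      · exact lt_irrefl _ ha
      · exact hx _ hm (Or.inl ⟨ha, lt_of_le_of_ne (by linarith) (hx' _ hm)⟩)
    · have hne : y' ≠ y := ne_of_lt h2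
      ext ⟨u, v⟩
      simp only [Finset.mem_insert, Finset.mem_erase, Prod.mk.injEq, ne_eq, add_sub_cancel,
        Bool.false_eq_true, if_false]
      grind

end RectDiag
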